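/- For all indices i ≠ j in {1,…,ℓ} with a_{ij} ≠ 0, all u, v ∈ ℂ with u ≠ v, and every function f, at every point γ (in the Cartan/difference-operator setting described in the context) at which all denominators occurring are nonzero: ([E_i(u),E_j(v)]f)(γ) = −(h/2)(α_i,α_j)·(u−v)^{−1}·([E_i(u), E_j(u)−E_j(v)]_+ f)(γ) − (u−v)^{−1}·([E_i^{(0)}, E_j(u)−E_j(v)] f)(γ), where E_i^{(0)} := Σ_{k=1}^{m_i} κ_{i,k}, [X,Y] := XY − YX and [X,Y]_+ := XY + YX. -/

import Mathlib

/-!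
Write `κ_{i,k} f (γ) = w_{i,k}(γ) f(γ − h d_i e_{i,k})`, put `x = γ_{i,k}`, `y = γ_{j,l}`,
`c = (h/2)(α_i, α_j)`, and let `X = κ_{i,k} κ_{j,l} f`, `Y = κ_{j,l} κ_{i,k} f`. As `i ≠ j`, the
shift in one index does not move the coordinates with the other index, so both sides of the
relation are sums over `k, l` of rational functions of `u, v, x, y` times `X` and `Y`; comparing
summands, everything reduces to the exchange relation `(x − y − c) X = (x − y + c) Y`
(`kap_kap_exchange`).

For `i < j` the weight `w_{j,l}` is invariant under the shift of `γ_{i,k}` (`wt_sh_of_lt`), and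
in `w_{i,k}` the only factors involving `γ_{j,l}` are `x − y − c − r h d_j` for
`r = 1, …, −a_{ji}`. Shifting `y` by `−h d_j` replaces `r` by `r − 1`, so the two products differ
only in their end factors: `x − y − c` for `r = 0`, and for `r = −a_{ji}`
`x − y − c + h d_j a_{ji} = x − y + c`, by the symmetry of `(·,·)` (`wt_exchange`).
The case `j < i` follows by exchanging the roles of `i` and `j`.
-/


open Finset

noncomputable section

variable {ℓ : ℕ}

/-- The pairing `(α_i, α_j) = d_i a_{ij}`, as a complex number. -/
def pr (a : Fin ℓ → Fin ℓ → ℤ) (d : Fin ℓ → ℕ) (i j : Fin ℓ) : ℂ :=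
  (d i : ℂ) * (a i j : ℂ)

/-- Points: tuples `γ = (γ_{i,k})`, `i ∈ {1,…,ℓ}`, `1 ≤ k ≤ m_i`, of complex numbers. -/
abbrev Pt {ℓ : ℕ} (m : Fin ℓ → ℕ) : Type := ((i : Fin ℓ) × Fin (m i)) → ℂ

variable {m : Fin ℓ → ℕ}

/-- `P_s(u; γ) = ∏_{p=1}^{m_s} (u − γ_{s,p})`. -/
def Pp (γ : Pt m) (s : Fin ℓ) (u : ℂ) : ℂ :=
  ∏ p : Fin (m s), (u - γ ⟨s, p⟩)

/-- The shifted point `γ + c·e_{i,k}`. -/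
def sh (γ : Pt m) (i : Fin ℓ) (k : Fin (m i)) (c : ℂ) : Pt m :=
  fun x => if x = ⟨i, k⟩ then γ x + c else γ x

/-- The denominator `∏_{p ≠ k} (γ_{i,k} − γ_{i,p})` (an empty product equals 1). -/
def Dk (γ : Pt m) (i : Fin ℓ) (k : Fin (m i)) : ℂ :=
  ∏ p ∈ Finset.univ.erase k, (γ ⟨i, k⟩ - γ ⟨i, p⟩)

/-- The difference operator `κ_{i,k}`:
`(κ_{i,k} f)(γ) = (√d_i)⁻¹ · [∏_{s>i} ∏_{r=1}^{−a_{si}} P_s(γ_{i,k} − (h/2)(α_i+rα_s,α_s); γ)]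
  · [∏_{p≠k}(γ_{i,k} − γ_{i,p})]⁻¹ · f(γ − h d_i e_{i,k})`. -/
def kap (a : Fin ℓ → Fin ℓ → ℤ) (d : Fin ℓ → ℕ) (h : ℂ)
    (i : Fin ℓ) (k : Fin (m i)) (f : Pt m → ℂ) (γ : Pt m) : ℂ :=
  ((Real.sqrt (d i) : ℝ) : ℂ)⁻¹ *
    (∏ s ∈ Finset.univ.filter (fun s => i < s), ∏ r ∈ Finset.range (-(a s i)).toNat,
      Pp γ s (γ ⟨i, k⟩ - h / 2 * (pr a d i s + ((r : ℂ) + 1) * pr a d s s))) *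
    (Dk γ i k)⁻¹ * f (sh γ i k (-(h * (d i : ℂ))))

/-- The difference operator `κ′_{i,k}` (depending on the functions `R_i`):
`(κ′_{i,k} f)(γ) = −(√d_i)⁻¹ · R_i(γ_{i,k} + h d_i)
  · [∏_{s<i} ∏_{r=1}^{−a_{si}} P_s(γ_{i,k} − (h/2)(α_i+rα_s,α_s) + h d_i; γ)]
  · [∏_{p≠k}(γ_{i,k} − γ_{i,p})]⁻¹ · f(γ + h d_i e_{i,k})`. -/
def kap' (a : Fin ℓ → Fin ℓ → ℤ) (d : Fin ℓ → ℕ) (h : ℂ) (R : Fin ℓ → ℂ → ℂ)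
    (i : Fin ℓ) (k : Fin (m i)) (f : Pt m → ℂ) (γ : Pt m) : ℂ :=
  -((Real.sqrt (d i) : ℝ) : ℂ)⁻¹ * R i (γ ⟨i, k⟩ + h * (d i : ℂ)) *
    (∏ s ∈ Finset.univ.filter (fun s => s < i), ∏ r ∈ Finset.range (-(a s i)).toNat,
      Pp γ s (γ ⟨i, k⟩ - h / 2 * (pr a d i s + ((r : ℂ) + 1) * pr a d s s) + h * (d i : ℂ))) *
    (Dk γ i k)⁻¹ * f (sh γ i k (h * (d i : ℂ)))

/-- The multiplication operator `H_i(u)`. -/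
def Hop (a : Fin ℓ → Fin ℓ → ℤ) (d : Fin ℓ → ℕ) (h : ℂ) (R : Fin ℓ → ℂ → ℂ)
    (u : ℂ) (i : Fin ℓ) (f : Pt m → ℂ) (γ : Pt m) : ℂ :=
  R i u *
    (∏ s ∈ Finset.univ.filter (fun s => s ≠ i), ∏ r ∈ Finset.range (-(a s i)).toNat,
      Pp γ s (u - h / 2 * (pr a d i s + ((r : ℂ) + 1) * pr a d s s))) *
    (Pp γ i u * Pp γ i (u - h * (d i : ℂ)))⁻¹ * f γ

/-- The operator `E_i(u) = Σ_{k=1}^{m_i} (u − γ_{i,k})⁻¹ κ_{i,k}`. -/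
def Eop (a : Fin ℓ → Fin ℓ → ℤ) (d : Fin ℓ → ℕ) (h : ℂ)
    (u : ℂ) (i : Fin ℓ) (f : Pt m → ℂ) (γ : Pt m) : ℂ :=
  ∑ k : Fin (m i), (u - γ ⟨i, k⟩)⁻¹ * kap a d h i k f γ

/-- The operator `F_i(u) = Σ_{k=1}^{m_i} κ′_{i,k} (u − γ_{i,k} − h d_i)⁻¹`. -/
def Fop (a : Fin ℓ → Fin ℓ → ℤ) (d : Fin ℓ → ℕ) (h : ℂ) (R : Fin ℓ → ℂ → ℂ)
    (u : ℂ) (i : Fin ℓ) (f : Pt m → ℂ) (γ : Pt m) : ℂ :=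
  ∑ k : Fin (m i), (u - γ ⟨i, k⟩ - h * (d i : ℂ))⁻¹ * kap' a d h R i k f γ

/-- The zero mode `E_i^{(0)} = Σ_{k=1}^{m_i} κ_{i,k}`. -/
def E0 (a : Fin ℓ → Fin ℓ → ℤ) (d : Fin ℓ → ℕ) (h : ℂ)
    (i : Fin ℓ) (f : Pt m → ℂ) (γ : Pt m) : ℂ :=
  ∑ k : Fin (m i), kap a d h i k f γ

/-- The weight of `κ_{i,k}`: the function `w_{i,k}` such that
`(κ_{i,k} f)(γ) = w_{i,k}(γ) f(γ − h d_i e_{i,k})`. -/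
def wt (a : Fin ℓ → Fin ℓ → ℤ) (d : Fin ℓ → ℕ) (h : ℂ)
    (i : Fin ℓ) (k : Fin (m i)) (γ : Pt m) : ℂ :=
  ((Real.sqrt (d i) : ℝ) : ℂ)⁻¹ *
    (∏ s ∈ Finset.univ.filter (fun s => i < s), ∏ r ∈ Finset.range (-(a s i)).toNat,
      Pp γ s (γ ⟨i, k⟩ - h / 2 * (pr a d i s + ((r : ℂ) + 1) * pr a d s s))) *
    (Dk γ i k)⁻¹

lemma kap_eq_wt (a : Fin ℓ → Fin ℓ → ℤ) (d : Fin ℓ → ℕ) (h : ℂ)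
    (i : Fin ℓ) (k : Fin (m i)) (f : Pt m → ℂ) (γ : Pt m) :
    kap a d h i k f γ = wt a d h i k γ * f (sh γ i k (-(h * (d i : ℂ)))) := rfl

lemma sh_of_ne (γ : Pt m) {i j : Fin ℓ} (hij : i ≠ j) (l : Fin (m j)) (c : ℂ) (k : Fin (m i)) :
    sh γ j l c ⟨i, k⟩ = γ ⟨i, k⟩ := by
  have : (⟨i, k⟩ : (i : Fin ℓ) × Fin (m i)) ≠ ⟨j, l⟩ := fun e => hij (congrArg Sigma.fst e)
  simp [sh, this]

lemma sh_self (γ : Pt m) (j : Fin ℓ) (l : Fin (m j)) (c : ℂ) :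
    sh γ j l c ⟨j, l⟩ = γ ⟨j, l⟩ + c := by
  simp [sh]

lemma sh_of_ne_snd (γ : Pt m) (j : Fin ℓ) {l p : Fin (m j)} (hp : p ≠ l) (c : ℂ) :
    sh γ j l c ⟨j, p⟩ = γ ⟨j, p⟩ := by
  simp [sh, hp]

lemma sh_comm (γ : Pt m) {i j : Fin ℓ} (hij : i ≠ j) (k : Fin (m i)) (l : Fin (m j)) (b c : ℂ) :
    sh (sh γ i k b) j l c = sh (sh γ j l c) i k b := by
  have : (⟨i, k⟩ : (i : Fin ℓ) × Fin (m i)) ≠ ⟨j, l⟩ := fun e => hij (congrArg Sigma.fst e)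
  funext x
  unfold sh
  by_cases h1 : x = ⟨i, k⟩
  · subst h1; simp [this]
  · simp [h1]

lemma Pp_sh_of_ne (γ : Pt m) {s j : Fin ℓ} (hs : s ≠ j) (l : Fin (m j)) (c u : ℂ) :
    Pp (sh γ j l c) s u = Pp γ s u := by
  simp only [Pp, sh_of_ne γ hs]

lemma Dk_sh_of_ne (γ : Pt m) {i j : Fin ℓ} (hij : i ≠ j) (k : Fin (m i)) (l : Fin (m j)) (c : ℂ) :
    Dk (sh γ j l c) i k = Dk γ i k := by
  simp only [Dk, sh_of_ne γ hij]

lemma Pp_eq_mul_erase (γ : Pt m) (j : Fin ℓ) (l : Fin (m j)) (u : ℂ) :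
    Pp γ j u = (u - γ ⟨j, l⟩) * ∏ p ∈ univ.erase l, (u - γ ⟨j, p⟩) :=
  (mul_prod_erase univ (fun p => u - γ ⟨j, p⟩) (mem_univ l)).symm

lemma Pp_sh_self (γ : Pt m) (j : Fin ℓ) (l : Fin (m j)) (c u : ℂ) :
    Pp (sh γ j l c) j u = (u - (γ ⟨j, l⟩ + c)) * ∏ p ∈ univ.erase l, (u - γ ⟨j, p⟩) := by
  rw [Pp_eq_mul_erase _ j l, sh_self]
  congr 1
  refine prod_congr rfl fun p hp => ?_
  rw [sh_of_ne_snd γ j (ne_of_mem_erase hp)]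

lemma mul_prod_range_shift (z e : ℂ) (n : ℕ) :
    z * ∏ r ∈ range n, (z - ((r : ℂ) + 1) * e) = (z - n * e) * ∏ r ∈ range n, (z - r * e) := by
  have h1 := prod_range_succ (fun r : ℕ => z - (r : ℂ) * e) n
  have h2 := prod_range_succ' (fun r : ℕ => z - (r : ℂ) * e) n
  rw [h1] at h2
  push_cast at h2
  linear_combination -h2

/-- For `i < j` the weight `w_{j,l}` involves only the coordinates with first index `≥ j`. -/
lemma wt_sh_of_lt (a : Fin ℓ → Fin ℓ → ℤ) (d : Fin ℓ → ℕ) (h : ℂ) {i j : Fin ℓ} (hij : i < j)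
    (k : Fin (m i)) (l : Fin (m j)) (c : ℂ) (γ : Pt m) :
    wt a d h j l (sh γ i k c) = wt a d h j l γ := by
  unfold wt
  rw [Dk_sh_of_ne γ hij.ne', sh_of_ne γ hij.ne']
  congr 2
  refine prod_congr rfl fun s hs => prod_congr rfl fun r _ => ?_
  exact Pp_sh_of_ne γ (hij.trans (mem_filter.1 hs).2).ne' _ _ _

/-- Effect of the shift `γ_{j,l} ↦ γ_{j,l} − h d_j` on the weight `w_{i,k}` for `i < j`, with the
denominator cleared. -/
lemma wt_exchange (a : Fin ℓ → Fin ℓ → ℤ) (d : Fin ℓ → ℕ)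
    (hdiag : ∀ i, a i i = 2) (hoff : ∀ i j, i ≠ j → a i j ≤ 0)
    (hsymm : ∀ i j, (d i : ℤ) * a i j = (d j : ℤ) * a j i)
    (h : ℂ) {i j : Fin ℓ} (hij : i < j) (k : Fin (m i)) (l : Fin (m j)) (γ : Pt m) :
    (γ ⟨i, k⟩ - γ ⟨j, l⟩ - h / 2 * pr a d i j) * wt a d h i k γ
      = (γ ⟨i, k⟩ - γ ⟨j, l⟩ + h / 2 * pr a d i j)
          * wt a d h i k (sh γ j l (-(h * (d j : ℂ)))) := by
  have hjm : j ∈ univ.filter (fun s => i < s) := by simp [hij]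
  set n := (-(a j i)).toNat with hn
  have hnC : (n : ℂ) = -(a j i : ℂ) := by
    have h0 := hoff j i hij.ne'
    have : (n : ℤ) = -(a j i) := by omega
    exact_mod_cast this
  have hsC : (d i : ℂ) * (a i j : ℂ) = (d j : ℂ) * (a j i : ℂ) := by exact_mod_cast hsymm i j
  have hjj : pr a d j j = 2 * (d j : ℂ) := by simp [pr, hdiag, mul_comm]
  -- the end factor `r = n` of the unshifted product is `x − y + c`
  have hend : γ ⟨i, k⟩ - γ ⟨j, l⟩ - h / 2 * pr a d i j - n * (h * d j)
      = γ ⟨i, k⟩ - γ ⟨j, l⟩ + h / 2 * pr a d i j := by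
    rw [hnC, pr]; linear_combination (-h) * hsC
  have key := mul_prod_range_shift (γ ⟨i, k⟩ - γ ⟨j, l⟩ - h / 2 * pr a d i j) (h * d j) n
  rw [hend] at key
  unfold wt
  rw [Dk_sh_of_ne γ hij.ne, sh_of_ne γ hij.ne, ← mul_prod_erase _ _ hjm,
    ← mul_prod_erase _ (fun s => ∏ r ∈ Finset.range (-(a s i)).toNat,
      Pp (sh γ j l (-(h * (d j : ℂ)))) s _) hjm]
  have hrest : (∏ s ∈ (univ.filter (fun s => i < s)).erase j, ∏ r ∈ range (-(a s i)).toNat,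
        Pp (sh γ j l (-(h * (d j : ℂ)))) s
          (γ ⟨i, k⟩ - h / 2 * (pr a d i s + ((r : ℂ) + 1) * pr a d s s)))
      = ∏ s ∈ (univ.filter (fun s => i < s)).erase j, ∏ r ∈ range (-(a s i)).toNat,
        Pp γ s (γ ⟨i, k⟩ - h / 2 * (pr a d i s + ((r : ℂ) + 1) * pr a d s s)) :=
    prod_congr rfl fun s hs => prod_congr rfl fun r _ =>
      Pp_sh_of_ne γ (ne_of_mem_erase hs) _ _ _
  rw [hrest]
  simp only [Pp_sh_self, Pp_eq_mul_erase γ j l, prod_mul_distrib, hjj, ← hn]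
  have e1 : (∏ r ∈ range n, (γ ⟨i, k⟩ - h / 2 * (pr a d i j + ((r : ℂ) + 1) * (2 * (d j : ℂ)))
      - γ ⟨j, l⟩)) = ∏ r ∈ range n,
        (γ ⟨i, k⟩ - γ ⟨j, l⟩ - h / 2 * pr a d i j - ((r : ℂ) + 1) * (h * d j)) :=
    prod_congr rfl fun r _ => by ring
  have e2 : (∏ r ∈ range n, (γ ⟨i, k⟩ - h / 2 * (pr a d i j + ((r : ℂ) + 1) * (2 * (d j : ℂ)))
      - (γ ⟨j, l⟩ + -(h * (d j : ℂ))))) = ∏ r ∈ range n,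
        (γ ⟨i, k⟩ - γ ⟨j, l⟩ - h / 2 * pr a d i j - (r : ℂ) * (h * d j)) :=
    prod_congr rfl fun r _ => by ring
  rw [e1, e2]
  linear_combination (((Real.sqrt (d i) : ℝ) : ℂ)⁻¹ * (Dk γ i k)⁻¹ *
    (∏ r ∈ range n, ∏ p ∈ univ.erase l,
      (γ ⟨i, k⟩ - h / 2 * (pr a d i j + ((r : ℂ) + 1) * (2 * (d j : ℂ))) - γ ⟨j, p⟩)) *
    ∏ s ∈ (univ.filter (fun s => i < s)).erase j, ∏ r ∈ range (-(a s i)).toNat,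
        Pp γ s (γ ⟨i, k⟩ - h / 2 * (pr a d i s + ((r : ℂ) + 1) * pr a d s s))) * key

/-- The exchange relation `(x − y − c) κ_{i,k} κ_{j,l} = (x − y + c) κ_{j,l} κ_{i,k}`, where
`x = γ_{i,k}`, `y = γ_{j,l}` and `c = (h/2)(α_i, α_j)`. -/
lemma kap_kap_exchange (a : Fin ℓ → Fin ℓ → ℤ) (d : Fin ℓ → ℕ)
    (hdiag : ∀ i, a i i = 2) (hoff : ∀ i j, i ≠ j → a i j ≤ 0)
    (hsymm : ∀ i j, (d i : ℤ) * a i j = (d j : ℤ) * a j i)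
    (h : ℂ) {i j : Fin ℓ} (hij : i ≠ j) (k : Fin (m i)) (l : Fin (m j))
    (f : Pt m → ℂ) (γ : Pt m) :
    (γ ⟨i, k⟩ - γ ⟨j, l⟩ - h / 2 * pr a d i j) * kap a d h i k (kap a d h j l f) γ
      = (γ ⟨i, k⟩ - γ ⟨j, l⟩ + h / 2 * pr a d i j) * kap a d h j l (kap a d h i k f) γ := by
  simp only [kap_eq_wt]
  rw [sh_comm γ hij]
  rcases lt_or_gt_of_ne hij with hlt | hlt
  · rw [wt_sh_of_lt a d h hlt]
    linear_combination (wt a d h j l γ *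
      f (sh (sh γ j l (-(h * (d j : ℂ)))) i k (-(h * (d i : ℂ))))) *
      wt_exchange a d hdiag hoff hsymm h hlt k l γ
  · rw [wt_sh_of_lt a d h hlt]
    have hp : pr a d j i = pr a d i j := by
      unfold pr; exact_mod_cast hsymm j i
    have := wt_exchange a d hdiag hoff hsymm h hlt l k γ
    rw [hp] at this
    linear_combination (wt a d h i k γ *
      f (sh (sh γ j l (-(h * (d j : ℂ)))) i k (-(h * (d i : ℂ))))) * this

/-- `κ_{i,k}` shifts only a coordinate with first index `i`, so it commutes with multiplication by
functions of the `γ_{j,l}`, `j ≠ i`. -/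
lemma kap_sum (a : Fin ℓ → Fin ℓ → ℤ) (d : Fin ℓ → ℕ) (h : ℂ) {i j : Fin ℓ} (hij : i ≠ j)
    (k : Fin (m i)) (g : ℂ → ℂ) (F : Fin (m j) → Pt m → ℂ) (γ : Pt m) :
    kap a d h i k (fun γ' => ∑ l, g (γ' ⟨j, l⟩) * F l γ') γ
      = ∑ l, g (γ ⟨j, l⟩) * kap a d h i k (F l) γ := by
  simp only [kap_eq_wt, sh_of_ne γ hij.symm, mul_sum]
  exact sum_congr rfl fun l _ => by ring

/-- The relation
`[E_i(u),E_j(v)] = −(h/2)(α_i,α_j)(u−v)⁻¹·[E_i(u),E_j(u)−E_j(v)]₊ − (u−v)⁻¹·[E_i^{(0)},E_j(u)−E_j(v)]`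
for `i ≠ j` with `a_{ij} ≠ 0`, for the explicit difference operators. -/
theorem E_E_distinct_index_commutation
    (hℓ : 1 ≤ ℓ) (a : Fin ℓ → Fin ℓ → ℤ) (d : Fin ℓ → ℕ)
    (hdiag : ∀ i, a i i = 2) (hoff : ∀ i j, i ≠ j → a i j ≤ 0)
    (hdpos : ∀ i, 0 < d i) (hsymm : ∀ i j, (d i : ℤ) * a i j = (d j : ℤ) * a j i)
    (h : ℂ) (i j : Fin ℓ) (hij : i ≠ j) (haij : a i j ≠ 0)
    (u v : ℂ) (huv : u ≠ v)
    (f : Pt m → ℂ) (γ : Pt m)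
    (hDi : ∀ k : Fin (m i), Dk γ i k ≠ 0)
    (hDj : ∀ l : Fin (m j), Dk γ j l ≠ 0)
    (hui : ∀ k : Fin (m i), u - γ ⟨i, k⟩ ≠ 0)
    (huj : ∀ l : Fin (m j), u - γ ⟨j, l⟩ ≠ 0)
    (hvj : ∀ l : Fin (m j), v - γ ⟨j, l⟩ ≠ 0) :
    Eop a d h u i (Eop a d h v j f) γ - Eop a d h v j (Eop a d h u i f) γ
      = -(h / 2 * pr a d i j) * (u - v)⁻¹ *
          (Eop a d h u i (fun γ' => Eop a d h u j f γ' - Eop a d h v j f γ') γ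
            + (Eop a d h u j (Eop a d h u i f) γ - Eop a d h v j (Eop a d h u i f) γ))
        - (u - v)⁻¹ *
          (E0 a d h i (fun γ' => Eop a d h u j f γ' - Eop a d h v j f γ') γ
            - (Eop a d h u j (E0 a d h i f) γ - Eop a d h v j (E0 a d h i f) γ)) := by
  have hdiff : (fun γ' => Eop a d h u j f γ' - Eop a d h v j f γ') = fun γ' =>
      ∑ l, (fun y => (u - y)⁻¹ - (v - y)⁻¹) (γ' ⟨j, l⟩) * kap a d h j l f γ' := by
    funext γ'
    simp only [Eop, ← sum_sub_distrib, sub_mul]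
  have hE : ∀ (w : ℂ) (s : Fin ℓ), Eop a d h w s f = fun γ' =>
      ∑ l, (fun y => (w - y)⁻¹) (γ' ⟨s, l⟩) * kap a d h s l f γ' := fun _ _ => rfl
  have h0 : E0 a d h i f = fun γ' =>
      ∑ k, (fun _ => (1 : ℂ)) (γ' ⟨i, k⟩) * kap a d h i k f γ' := by
    funext γ'
    simp only [E0, one_mul]
  -- expand every composite into a double sum, with the index `k` of `i` outside
  have hEE : ∀ w, Eop a d h u i (Eop a d h w j f) γ = ∑ k, ∑ l,
      (u - γ ⟨i, k⟩)⁻¹ * (w - γ ⟨j, l⟩)⁻¹ * kap a d h i k (kap a d h j l f) γ := by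
    intro w
    rw [hE w j]
    simp only [Eop, kap_sum a d h hij (g := fun y => (w - y)⁻¹), mul_sum, mul_assoc]
  have hEE' : ∀ w, Eop a d h w j (Eop a d h u i f) γ = ∑ k, ∑ l,
      (u - γ ⟨i, k⟩)⁻¹ * (w - γ ⟨j, l⟩)⁻¹ * kap a d h j l (kap a d h i k f) γ := by
    intro w
    rw [hE u i, sum_comm]
    simp only [Eop, kap_sum a d h hij.symm (g := fun x => (u - x)⁻¹), mul_sum]
    exact sum_congr rfl fun l _ => sum_congr rfl fun k _ => by ring
  have hE0' : ∀ w, Eop a d h w j (E0 a d h i f) γ = ∑ k, ∑ l,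
      (w - γ ⟨j, l⟩)⁻¹ * kap a d h j l (kap a d h i k f) γ := by
    intro w
    rw [h0, sum_comm]
    simp only [Eop]
    refine sum_congr rfl fun l _ => ?_
    rw [kap_sum a d h hij.symm l (fun _ => 1)]
    simp only [mul_sum, one_mul]
  have hEd : Eop a d h u i (fun γ' => Eop a d h u j f γ' - Eop a d h v j f γ') γ = ∑ k, ∑ l,
      (u - γ ⟨i, k⟩)⁻¹ * ((u - γ ⟨j, l⟩)⁻¹ - (v - γ ⟨j, l⟩)⁻¹)
        * kap a d h i k (kap a d h j l f) γ := by
    rw [hdiff]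
    simp only [Eop, kap_sum a d h hij (g := fun y => (u - y)⁻¹ - (v - y)⁻¹), mul_sum, mul_assoc]
  have hE0d : E0 a d h i (fun γ' => Eop a d h u j f γ' - Eop a d h v j f γ') γ = ∑ k, ∑ l,
      ((u - γ ⟨j, l⟩)⁻¹ - (v - γ ⟨j, l⟩)⁻¹) * kap a d h i k (kap a d h j l f) γ := by
    rw [hdiff]
    simp only [E0, kap_sum a d h hij (g := fun y => (u - y)⁻¹ - (v - y)⁻¹)]
  rw [hEd, hE0d, hEE, hEE', hEE', hE0', hE0']
  simp only [← sum_sub_distrib, ← sum_add_distrib, mul_sum]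
  refine sum_congr rfl fun k _ => sum_congr rfl fun l _ => ?_
  have key := kap_kap_exchange a d hdiag hoff hsymm h hij k l f γ
  generalize kap a d h i k (kap a d h j l f) γ = X at *
  generalize kap a d h j l (kap a d h i k f) γ = Y at *
  have h1 := hui k
  have h2 := huj l
  have h3 := hvj l
  have h4 : u - v ≠ 0 := sub_ne_zero.2 huv
  generalize γ ⟨i, k⟩ = x at *
  generalize γ ⟨j, l⟩ = y at *
  field_simp
  linear_combination 2 * (u - v) * key


end
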